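/- arXiv:2108.06630 — 7 statements merged into one kernel-verified Lean document; each statement's English description precedes it below -/
import Mathlib

section
/- Let N ≥ 2 be an integer, h > 0, and let (l,m) be an interior index (1 ≤ l,m ≤ N−1). Then there exists a unique grid function G satisfying the homogeneous Dirichlet boundary condition such that (A_h G)_{i,j} = 1/h² when (i,j) = (l,m) and (A_h G)_{i,j} = 0 at all other interior indices 1 ≤ i,j ≤ N−1; that is, the Dirichlet discrete Green function centered at (l,m) exists and is unique. -/
/-- The five-point discrete Laplacian acting on grid functions, at interior
indices `1 ≤ i, j ≤ N-1`. -/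
noncomputable def fivePointLaplacian (h : ℝ) (U : ℕ → ℕ → ℝ) (i j : ℕ) : ℝ :=
  (U (i - 1) j + U (i + 1) j + U i (j - 1) + U i (j + 1) - 4 * U i j) / h ^ 2

/-- A grid function on `{0,…,N} × {0,…,N}` satisfies the homogeneous Dirichlet
boundary condition if it vanishes whenever `i ∈ {0, N}` or `j ∈ {0, N}`. -/
def DirichletBC (N : ℕ) (U : ℕ → ℕ → ℝ) : Prop :=
  ∀ i j, i ≤ N → j ≤ N → (i = 0 ∨ i = N ∨ j = 0 ∨ j = N) → U i j = 0

/-- `G` is the Dirichlet discrete Green function centered at the interior index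
`(l,m)`: it satisfies the homogeneous Dirichlet boundary condition, and
`(A_h G)_{i,j}` is `1/h²` at `(l,m)` and `0` at all other interior indices. -/
def IsDiscreteGreen (N : ℕ) (h : ℝ) (l m : ℕ) (G : ℕ → ℕ → ℝ) : Prop :=
  DirichletBC N G ∧
  ∀ i j, 1 ≤ i → i ≤ N - 1 → 1 ≤ j → j ≤ N - 1 →
    fivePointLaplacian h G i j = if i = l ∧ j = m then 1 / h ^ 2 else 0

/-- Discrete maximum principle (one-sided). -/
theorem grid_nonpos (N : ℕ) (U : ℕ → ℕ → ℝ) (hb : DirichletBC N U)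
    (hU : ∀ i j, 1 ≤ i → i ≤ N - 1 → 1 ≤ j → j ≤ N - 1 →
      U (i - 1) j + U (i + 1) j + U i (j - 1) + U i (j + 1) - 4 * U i j = 0) :
    ∀ i j, i ≤ N → j ≤ N → U i j ≤ 0 := by
  obtain ⟨⟨a, b⟩, hab, hmax⟩ := Finset.exists_max_image
    (Finset.range (N + 1) ×ˢ Finset.range (N + 1)) (fun p => U p.1 p.2) ⟨(0, 0), by simp⟩
  simp only [Finset.mem_product, Finset.mem_range, Prod.forall] at hab hmax
  have hle : ∀ i j, i ≤ N → j ≤ N → U i j ≤ U a b := fun i j hi hj =>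
    hmax i j ⟨by omega, by omega⟩
  intro i j hi hj
  refine (hle i j hi hj).trans ?_
  by_contra hpos
  push Not at hpos
  have key : ∀ k, k ≤ N → ∀ j, j ≤ N → U k j < U a b := by
    intro k
    induction k with
    | zero =>
      intro hk j hj
      rw [hb 0 j hk hj (Or.inl rfl)]
      exact hpos
    | succ k ih =>
      intro hk j hj
      by_cases hbd : k + 1 = N ∨ j = 0 ∨ j = N
      · rw [hb (k + 1) j hk hj (Or.inr hbd)]
        exact hpos
      · have h0 := hU (k + 1) j (by omega) (by omega) (by omega) (by omega)
        have h1 := ih (by omega) j hj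
        have h2 := hle (k + 1 + 1) j (by omega) hj
        have h3 := hle (k + 1) (j - 1) hk (by omega)
        have h4 := hle (k + 1) (j + 1) hk (by omega)
        simp only [Nat.add_sub_cancel] at h0
        linarith
  exact lt_irrefl _ (key a (by omega) b (by omega))

theorem grid_zero (N : ℕ) (U : ℕ → ℕ → ℝ) (hb : DirichletBC N U)
    (hU : ∀ i j, 1 ≤ i → i ≤ N - 1 → 1 ≤ j → j ≤ N - 1 →
      U (i - 1) j + U (i + 1) j + U i (j - 1) + U i (j + 1) - 4 * U i j = 0) :
    ∀ i j, i ≤ N → j ≤ N → U i j = 0 := by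
  intro i j hi hj
  have h1 := grid_nonpos N U hb hU i j hi hj
  have h2 := grid_nonpos N (fun i j => - U i j)
    (fun i j hi hj h => by simp [hb i j hi hj h])
    (fun i j a b c d => by have := hU i j a b c d; linarith) i j hi hj
  linarith

/-- Extension by zero of a function on the finite grid. -/
def gridExt (N : ℕ) (u : Fin (N + 1) × Fin (N + 1) → ℝ) (i j : ℕ) : ℝ :=
  if h : i < N + 1 ∧ j < N + 1 then u (⟨i, h.1⟩, ⟨j, h.2⟩) else 0

theorem gridExt_add (N : ℕ) (u v : Fin (N + 1) × Fin (N + 1) → ℝ) (i j : ℕ) :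
    gridExt N (u + v) i j = gridExt N u i j + gridExt N v i j := by
  unfold gridExt; split_ifs <;> simp

theorem gridExt_smul (N : ℕ) (c : ℝ) (u : Fin (N + 1) × Fin (N + 1) → ℝ) (i j : ℕ) :
    gridExt N (c • u) i j = c * gridExt N u i j := by
  unfold gridExt; split_ifs <;> simp

/-- Boundary trace together with the (unscaled) five-point Laplacian, as a linear map. -/
def gridOp (N : ℕ) :
    (Fin (N + 1) × Fin (N + 1) → ℝ) →ₗ[ℝ] (Fin (N + 1) × Fin (N + 1) → ℝ) where
  toFun u p :=
    if (p.1 : ℕ) = 0 ∨ (p.1 : ℕ) = N ∨ (p.2 : ℕ) = 0 ∨ (p.2 : ℕ) = N then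
      gridExt N u p.1 p.2
    else gridExt N u (p.1 - 1) p.2 + gridExt N u (p.1 + 1) p.2 + gridExt N u p.1 (p.2 - 1)
      + gridExt N u p.1 (p.2 + 1) - 4 * gridExt N u p.1 p.2
  map_add' u v := by
    funext p
    simp only [gridExt_add, Pi.add_apply]
    split_ifs <;> ring
  map_smul' c u := by
    funext p
    simp only [gridExt_smul, Pi.smul_apply, smul_eq_mul, RingHom.id_apply]
    split_ifs <;> ring

theorem gridOp_bd (N : ℕ) (u : Fin (N + 1) × Fin (N + 1) → ℝ) (i j : ℕ) (hi : i ≤ N)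
    (hj : j ≤ N) (h : i = 0 ∨ i = N ∨ j = 0 ∨ j = N) :
    gridOp N u (⟨i, by omega⟩, ⟨j, by omega⟩) = gridExt N u i j := by
  change (if _ then _ else _) = _
  rw [if_pos h]

theorem gridOp_int (N : ℕ) (u : Fin (N + 1) × Fin (N + 1) → ℝ) (i j : ℕ) (hi : i ≤ N)
    (hj : j ≤ N) (h : ¬ (i = 0 ∨ i = N ∨ j = 0 ∨ j = N)) :
    gridOp N u (⟨i, by omega⟩, ⟨j, by omega⟩) =
      gridExt N u (i - 1) j + gridExt N u (i + 1) j + gridExt N u i (j - 1)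
      + gridExt N u i (j + 1) - 4 * gridExt N u i j := by
  change (if _ then _ else _) = _
  rw [if_neg h]

theorem gridOp_injective (N : ℕ) : Function.Injective (gridOp N) := by
  rw [injective_iff_map_eq_zero]
  intro u hu
  have hz := grid_zero N (gridExt N u)
    (fun i j hi hj h => by rw [← gridOp_bd N u i j hi hj h, hu]; rfl)
    (fun i j h1 h2 h3 h4 => by
      rw [← gridOp_int N u i j (by omega) (by omega) (by omega), hu]; rfl)
  funext ⟨i, j⟩
  have := hz i j (by omega) (by omega)
  rw [gridExt, dif_pos ⟨i.2, j.2⟩] at this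
  exact this

/-- Existence and uniqueness of the Dirichlet discrete Green function centered
at an interior index `(l,m)`. -/
theorem discreteGreen_exists_unique (N : ℕ) (hN : 2 ≤ N) (h : ℝ) (hh : 0 < h)
    (l m : ℕ) (hl1 : 1 ≤ l) (hl2 : l ≤ N - 1) (hm1 : 1 ≤ m) (hm2 : m ≤ N - 1) :
    ∃ G : ℕ → ℕ → ℝ, IsDiscreteGreen N h l m G ∧
      ∀ G' : ℕ → ℕ → ℝ, IsDiscreteGreen N h l m G' →
        ∀ i j, i ≤ N → j ≤ N → G' i j = G i j := by
  have hh2 : h ^ 2 ≠ 0 := by positivity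
  obtain ⟨u, hu⟩ := (LinearMap.injective_iff_surjective.1 (gridOp_injective N))
    (fun p => if (p.1 : ℕ) = l ∧ (p.2 : ℕ) = m then 1 else 0)
  have hG : IsDiscreteGreen N h l m (gridExt N u) := by
    constructor
    · intro i j hi hj hb
      rw [← gridOp_bd N u i j hi hj hb, hu]
      exact if_neg (by simp only; omega)
    · intro i j h1 h2 h3 h4
      unfold fivePointLaplacian
      rw [← gridOp_int N u i j (by omega) (by omega) (by omega), hu]
      simp only
      split_ifs <;> simp
  refine ⟨gridExt N u, hG, ?_⟩
  intro G' hG' i j hi hj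
  have := grid_zero N (fun i j => G' i j - gridExt N u i j)
    (fun i j hi hj hb => by simp [hG'.1 i j hi hj hb, hG.1 i j hi hj hb])
    (fun i j h1 h2 h3 h4 => by
      have e := (hG'.2 i j h1 h2 h3 h4).trans (hG.2 i j h1 h2 h3 h4).symm
      unfold fivePointLaplacian at e
      rw [div_left_inj' hh2] at e
      linarith) i j hi hj
  exact sub_eq_zero.1 this
end

section
/- Let N ≥ 2 be an integer and h > 0, and let U be a grid function such that (A_h U)_{i,j} = 0 at every interior index 1 ≤ i,j ≤ N−1, and which satisfies the discrete homogeneous Neumann boundary conditions: U_{0,j} = U_{1,j} and U_{N,j} = U_{N−1,j} for all 0 ≤ j ≤ N, and U_{i,0} = U_{i,1} and U_{i,N} = U_{i,N−1} for all 0 ≤ i ≤ N. Then U is constant. In particular, a solution of the discrete Neumann problem normalized by U_{1,1} = 0 is unique. -/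
theorem propagate_line (N : ℕ) (P : ℕ → Prop) (a : ℕ) (ha1 : 1 ≤ a) (haN : a ≤ N - 1)
    (ha : P a) (hs : ∀ i, 1 ≤ i → i ≤ N - 1 → P i → P (i - 1) ∧ P (i + 1)) :
    ∀ i, i ≤ N → P i := by
  have up : ∀ k, a + k ≤ N → P (a + k) := by
    intro k
    induction k with
    | zero => intro _; exact ha
    | succ k ih =>
      intro hk
      exact (hs (a + k) (by omega) (by omega) (ih (by omega))).2
  have down : ∀ k, k ≤ a → P (a - k) := by
    intro k
    induction k with
    | zero => intro _; exact ha
    | succ k ih =>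
      intro hk
      exact (hs (a - k) (by omega) (by omega) (ih (by omega))).1
  intro i hi
  rcases le_total a i with hai | hai
  · have := up (i - a) (by omega)
    rwa [show a + (i - a) = i by omega] at this
  · have := down (a - i) (by omega)
    rwa [show a - (a - i) = i by omega] at this

/-- A discrete harmonic grid function satisfying the discrete homogeneous
Neumann boundary conditions is constant; in particular the solution of the
discrete Neumann problem normalized by `U 1 1 = 0` is unique (it vanishes). -/
theorem discreteNeumann_harmonic_constant (N : ℕ) (hN : 2 ≤ N) (h : ℝ) (hh : 0 < h)
    (U : ℕ → ℕ → ℝ)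
    (hharm : ∀ i j, 1 ≤ i → i ≤ N - 1 → 1 ≤ j → j ≤ N - 1 →
      fivePointLaplacian h U i j = 0)
    (hbcx : ∀ j, j ≤ N → U 0 j = U 1 j ∧ U N j = U (N - 1) j)
    (hbcy : ∀ i, i ≤ N → U i 0 = U i 1 ∧ U i N = U i (N - 1)) :
    (∃ c : ℝ, ∀ i j, i ≤ N → j ≤ N → U i j = c) ∧
    (U 1 1 = 0 → ∀ i j, i ≤ N → j ≤ N → U i j = 0) := by
  have key : ∃ c : ℝ, ∀ i j, i ≤ N → j ≤ N → U i j = c := by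
    obtain ⟨⟨a, b⟩, hab, hmax⟩ := Finset.exists_max_image
      (Finset.range (N + 1) ×ˢ Finset.range (N + 1)) (fun p => U p.1 p.2)
      ⟨(0, 0), by simp⟩
    simp only [Finset.mem_product, Finset.mem_range] at hab hmax
    have hle : ∀ i j, i ≤ N → j ≤ N → U i j ≤ U a b := fun i j hi hj =>
      hmax (i, j) ⟨by simp; omega, by simp; omega⟩
    generalize hM : U a b = M at hle
    -- a maximum point with interior indices
    obtain ⟨a', ha1, haN, ha'⟩ : ∃ a', 1 ≤ a' ∧ a' ≤ N - 1 ∧ U a' b = M := by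
      have hb := hbcx b (by omega)
      by_cases h0 : a = 0
      · subst h0
        exact ⟨1, by omega, by omega, by rw [← hb.1, hM]⟩
      · by_cases h1 : a = N
        · subst h1
          exact ⟨a - 1, by omega, by omega, by rw [← hb.2, hM]⟩
        · exact ⟨a, by omega, by omega, hM⟩
    obtain ⟨b', hb1, hbN, hb'⟩ : ∃ b', 1 ≤ b' ∧ b' ≤ N - 1 ∧ U a' b' = M := by
      have hb := hbcy a' (by omega)
      by_cases h0 : b = 0
      · subst h0
        exact ⟨1, by omega, by omega, by rw [← hb.1, ha']⟩
      · by_cases h1 : b = N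
        · subst h1
          exact ⟨b - 1, by omega, by omega, by rw [← hb.2, ha']⟩
        · exact ⟨b, by omega, by omega, ha'⟩
    have step : ∀ i j, 1 ≤ i → i ≤ N - 1 → 1 ≤ j → j ≤ N - 1 → U i j = M →
        (U (i - 1) j = M ∧ U (i + 1) j = M) ∧ (U i (j - 1) = M ∧ U i (j + 1) = M) := by
      intro i j hi1 hi2 hj1 hj2 hij
      have e := hharm i j hi1 hi2 hj1 hj2
      unfold fivePointLaplacian at e
      have e' := (div_eq_zero_iff.mp e).resolve_right (by positivity)
      have l1 := hle (i - 1) j (by omega) (by omega)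
      have l2 := hle (i + 1) j (by omega) (by omega)
      have l3 := hle i (j - 1) (by omega) (by omega)
      have l4 := hle i (j + 1) (by omega) (by omega)
      refine ⟨⟨?_, ?_⟩, ?_, ?_⟩ <;> linarith
    have row : ∀ i, i ≤ N → U i b' = M :=
      propagate_line N (fun i => U i b' = M) a' ha1 haN hb'
        (fun i h1 h2 hi => (step i b' h1 h2 hb1 hbN hi).1)
    have col : ∀ i, 1 ≤ i → i ≤ N - 1 → ∀ j, j ≤ N → U i j = M := fun i hi1 hi2 =>
      propagate_line N (fun j => U i j = M) b' hb1 hbN (row i (by omega))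
        (fun j h1 h2 hj => (step i j hi1 hi2 h1 h2 hj).2)
    refine ⟨M, fun i j hi hj => ?_⟩
    by_cases h0 : i = 0
    · rw [h0, (hbcx j hj).1]
      exact col 1 (by omega) (by omega) j hj
    · by_cases h1 : i = N
      · rw [h1, (hbcx j hj).2]
        exact col (N - 1) (by omega) (by omega) j hj
      · exact col i (by omega) (by omega) j hj
  refine ⟨key, fun h11 i j hi hj => ?_⟩
  obtain ⟨c, hc⟩ := key
  rw [hc i j hi hj, ← hc 1 1 (by omega) (by omega), h11]
end

section
/- Let h > 0, M ≥ 0, X ∈ ℝ, and let f : ℝ → ℝ be Lipschitz continuous with Lipschitz constant M. Then |∫_ℝ f(x)·δ¹_h(x − X) dx − f(X)| ≤ M·h/4 (consistency of the discrete delta function δ¹_h against Lipschitz test functions). -/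
open MeasureTheory

/-- Consistency of the discrete delta function `δ¹_h` against Lipschitz test
functions: `|∫ f(x) δ¹_h(x − X) dx − f(X)| ≤ M h / 4` whenever `f` is
`M`-Lipschitz. -/
theorem discreteDelta_consistency_lipschitz (h M X : ℝ) (hh : 0 < h) (hM : 0 ≤ M)
    (f : ℝ → ℝ) (hf : LipschitzWith (Real.toNNReal M) f)
    (d : ℝ → ℝ) (hd : ∀ x, d x = if |x| ≤ h / 2 then 1 / h else 0) :
    |(∫ x, f x * d (x - X)) - f X| ≤ M * h / 4 := by
  have hc : Continuous f := hf.continuous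
  have hle : X - h / 2 ≤ X + h / 2 := by linarith
  have h1 : (∫ x, f x * d (x - X)) = ∫ x in (X - h / 2)..(X + h / 2), f x * (1 / h) := by
    rw [intervalIntegral.integral_of_le hle, ← integral_Icc_eq_integral_Ioc,
      ← integral_indicator measurableSet_Icc]
    congr 1
    ext x
    rw [hd, Set.indicator_apply]
    have : |x - X| ≤ h / 2 ↔ x ∈ Set.Icc (X - h / 2) (X + h / 2) := by
      rw [abs_le, Set.mem_Icc]
      constructor <;> rintro ⟨a, b⟩ <;> constructor <;> linarith
    by_cases hx : x ∈ Set.Icc (X - h / 2) (X + h / 2)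
    · rw [if_pos hx, if_pos (this.2 hx)]
    · rw [if_neg hx, if_neg (fun k => hx (this.1 k)), mul_zero]
  have h2 : f X = ∫ x in (X - h / 2)..(X + h / 2), f X * (1 / h) := by
    rw [intervalIntegral.integral_const, smul_eq_mul]
    field_simp
    ring
  have h3 : (∫ x in (X - h / 2)..(X + h / 2), f x * (1 / h)) - f X =
      ∫ x in (X - h / 2)..(X + h / 2), (f x * (1 / h) - f X * (1 / h)) := by
    have hc' : Continuous fun x => f x * (1 / h) := by fun_prop
    rw [intervalIntegral.integral_sub (hc'.intervalIntegrable _ _)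
      (continuous_const.intervalIntegrable _ _), ← h2]
  have h4 : ∫ x in (X - h / 2)..(X + h / 2), M / h * |x - X| = M * h / 4 := by
    rw [intervalIntegral.integral_const_mul,
      intervalIntegral.integral_comp_sub_right (fun y => |y|) X,
      ← intervalIntegral.integral_add_adjacent_intervals (b := 0)
        (continuous_abs.intervalIntegrable _ _) (continuous_abs.intervalIntegrable _ _)]
    have a : ∫ y in (X - h / 2 - X)..0, |y| = ∫ y in (X - h / 2 - X)..0, -y := by
      apply intervalIntegral.integral_congr
      intro y hy
      rw [Set.uIcc_of_le (by linarith)] at hy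
      exact abs_of_nonpos hy.2
    have b : ∫ y in (0 : ℝ)..(X + h / 2 - X), |y| = ∫ y in (0 : ℝ)..(X + h / 2 - X), y := by
      apply intervalIntegral.integral_congr
      intro y hy
      rw [Set.uIcc_of_le (by linarith)] at hy
      exact abs_of_nonneg hy.1
    rw [a, b, intervalIntegral.integral_neg, integral_id, integral_id]
    field_simp
    ring
  rw [h1, h3, ← h4, ← Real.norm_eq_abs]
  apply intervalIntegral.norm_integral_le_of_norm_le hle
  · refine Filter.Eventually.of_forall fun x _ => ?_
    have hl := hf.dist_le_mul x X
    rw [Real.coe_toNNReal M hM, Real.dist_eq, Real.dist_eq] at hl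
    rw [← sub_mul, norm_mul, Real.norm_eq_abs, Real.norm_of_nonneg (by positivity)]
    calc |f x - f X| * (1 / h) ≤ M * |x - X| * (1 / h) := by gcongr
      _ = M / h * |x - X| := by ring
  · apply Continuous.intervalIntegrable
    fun_prop
end

section
/- Let h > 0, M ≥ 0, and let u : ℝ² → ℝ be four times continuously differentiable on the closed ball of radius h centered at a point (x,y), with ‖D⁴u‖ ≤ M on that ball (the norm of the fourth total derivative bounds all fourth-order partial derivatives). Then the five-point discrete Laplacian satisfies |(u(x−h,y) + u(x+h,y) + u(x,y−h) + u(x,y+h) − 4u(x,y))/h² − Δu(x,y)| ≤ M·h²/6, where Δu = u_xx + u_yy is the Laplacian of u. -/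
theorem fp_step (h C : ℝ) (n : ℕ) (g g' : ℝ → ℝ) (h0 : g 0 = 0)
    (hd : ∀ t ∈ Set.Icc 0 h, HasDerivWithinAt g (g' t) (Set.Icc 0 h) t)
    (hb : ∀ t ∈ Set.Icc 0 h, |g' t| ≤ C * t ^ n) :
    ∀ t ∈ Set.Icc 0 h, |g t| ≤ C / (n + 1) * t ^ (n + 1) := by
  have key := image_norm_le_of_norm_deriv_right_le_deriv_boundary (f := g) (f' := g')
    (a := 0) (b := h) (B := fun t => C / (n + 1) * t ^ (n + 1)) (B' := fun t => C * t ^ n)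
    (fun t ht => (hd t ht).continuousWithinAt)
    (fun t ht => (hd t ⟨ht.1, ht.2.le⟩).mono_of_mem_nhdsWithin
      (Icc_mem_nhdsGE_of_mem ht))
    (by simp [h0])
    (fun t => by
      have hn : (n : ℝ) + 1 ≠ 0 := by positivity
      have := (hasDerivAt_pow (n + 1) t).const_mul (C / (n + 1))
      refine this.congr_deriv ?_
      push_cast
      field_simp)
    (fun t ht => by
      rw [Real.norm_eq_abs]; exact hb t ⟨ht.1, ht.2.le⟩)
  intro t ht
  exact key ht

theorem fp_line (h M c : ℝ) (hh : 0 < h) (s : Set (ℝ × ℝ)) (hs : UniqueDiffOn ℝ s)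
    (u : ℝ × ℝ → ℝ) (hu : ContDiffOn ℝ 4 u s)
    (hbd : ∀ p ∈ s, ‖iteratedFDerivWithin ℝ 4 u s p‖ ≤ M)
    (q : ℝ → ℝ × ℝ) (v : ℝ × ℝ) (hv : ‖v‖ ≤ 1) (hq : ∀ t, HasDerivAt q v t)
    (hqs : Set.MapsTo q (Set.Icc (c - h) (c + h)) s) :
    |u (q (c - h)) + u (q (c + h)) - 2 * u (q c) - h ^ 2 * deriv (deriv fun t => u (q t)) c|
      ≤ M * h ^ 4 / 12 := by
  set I := Set.Icc (c - h) (c + h) with hI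
  let F : ℕ → ℝ → ℝ := fun k t => iteratedFDerivWithin ℝ k u s (q t) (fun _ => v)
  have hF : ∀ k : ℕ, k < 4 → ∀ t ∈ I, HasDerivWithinAt (F k) (F (k + 1) t) I t := by
    intro k hk t ht
    have h1 := (hu.differentiableOn_iteratedFDerivWithin (m := k) (by exact_mod_cast hk) hs
      (q t) (hqs ht)).hasFDerivWithinAt
    have h2 := h1.comp_hasDerivWithinAt t (hq t).hasDerivWithinAt hqs
    have h3 := (ContinuousMultilinearMap.apply ℝ (fun _ : Fin k => ℝ × ℝ) ℝ
      (fun _ => v)).hasFDerivAt.comp_hasDerivWithinAt t h2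
    exact h3
  have hF0 : ∀ t, F 0 t = u (q t) := fun t => by simp [F]
  have hF4 : ∀ t ∈ I, |F 4 t| ≤ M := by
    intro t ht
    have h1 := (iteratedFDerivWithin ℝ 4 u s (q t)).le_opNorm (fun _ => v)
    have h2 : ∏ _i : Fin 4, ‖v‖ ≤ 1 := Finset.prod_le_one (fun _ _ => norm_nonneg _) fun _ _ => hv
    calc |F 4 t| ≤ _ := h1
      _ ≤ ‖iteratedFDerivWithin ℝ 4 u s (q t)‖ * 1 := by gcongr
      _ ≤ M := by rw [mul_one]; exact hbd _ (hqs ht)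
  have hder : deriv (deriv fun t => u (q t)) c = F 2 c := by
    have hc : c ∈ Set.Ioo (c - h) (c + h) := ⟨by linarith, by linarith⟩
    have e : (deriv fun t => u (q t)) =ᶠ[nhds c] F 1 := by
      filter_upwards [isOpen_Ioo.mem_nhds hc] with t ht
      have h1 := (hF 0 (by norm_num) t ⟨ht.1.le, ht.2.le⟩).hasDerivAt (Icc_mem_nhds ht.1 ht.2)
      have h2 : F 0 = fun t => u (q t) := funext hF0
      rw [h2] at h1
      exact h1.deriv
    rw [e.deriv_eq]
    exact ((hF 1 (by norm_num) c ⟨hc.1.le, hc.2.le⟩).hasDerivAt (Icc_mem_nhds hc.1 hc.2)).deriv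
  have mp : Set.MapsTo (fun t => c + t) (Set.Icc 0 h) I := fun t ht =>
    ⟨by linarith [ht.1], by linarith [ht.2]⟩
  have mm : Set.MapsTo (fun t => c - t) (Set.Icc 0 h) I := fun t ht =>
    ⟨by linarith [ht.2], by linarith [ht.1]⟩
  have dp : ∀ k : ℕ, k < 4 → ∀ t ∈ Set.Icc 0 h,
      HasDerivWithinAt (fun t => F k (c + t)) (F (k + 1) (c + t)) (Set.Icc 0 h) t := by
    intro k hk t ht
    have := (hF k hk (c + t) (mp ht)).comp t
      ((hasDerivAt_id t).const_add c).hasDerivWithinAt mp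
    simpa [Function.comp_def] using this
  have dm : ∀ k : ℕ, k < 4 → ∀ t ∈ Set.Icc 0 h,
      HasDerivWithinAt (fun t => F k (c - t)) (-F (k + 1) (c - t)) (Set.Icc 0 h) t := by
    intro k hk t ht
    have := (hF k hk (c - t) (mm ht)).comp t
      ((hasDerivAt_id t).const_sub c).hasDerivWithinAt mm
    simpa [Function.comp_def] using this
  have b3 := fp_step h (2 * M) 0 (fun t => F 3 (c + t) - F 3 (c - t))
    (fun t => F 4 (c + t) + F 4 (c - t)) (by simp)
    (fun t ht => ((dp 3 (by norm_num) t ht).sub (dm 3 (by norm_num) t ht)).congr_deriv (by ring))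
    (fun t ht => by
      have h1 := abs_le.1 (hF4 _ (mp ht))
      have h2 := abs_le.1 (hF4 _ (mm ht))
      simp only [pow_zero, mul_one]
      exact abs_le.2 ⟨by linarith [h1.1, h2.1], by linarith [h1.2, h2.2]⟩)
  have b2 := fp_step h _ _ (fun t => F 2 (c + t) + F 2 (c - t) - 2 * F 2 c)
    (fun t => F 3 (c + t) - F 3 (c - t)) (by simp; ring)
    (fun t ht => (((dp 2 (by norm_num) t ht).add (dm 2 (by norm_num) t ht)).sub_const
      (2 * F 2 c)).congr_deriv (by ring)) b3
  have b1 := fp_step h _ _ (fun t => F 1 (c + t) - F 1 (c - t) - t * (2 * F 2 c))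
    (fun t => F 2 (c + t) + F 2 (c - t) - 2 * F 2 c) (by simp)
    (fun t ht => (((dp 1 (by norm_num) t ht).sub (dm 1 (by norm_num) t ht)).sub
      ((hasDerivWithinAt_id t _).mul_const (2 * F 2 c))).congr_deriv (by ring)) b2
  have b0 := fp_step h _ _ (fun t => F 0 (c + t) + F 0 (c - t) - 2 * F 0 c - t ^ 2 * F 2 c)
    (fun t => F 1 (c + t) - F 1 (c - t) - t * (2 * F 2 c)) (by simp; ring)
    (fun t ht => ((((dp 0 (by norm_num) t ht).add (dm 0 (by norm_num) t ht)).sub_const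
      (2 * F 0 c)).sub
      ((hasDerivAt_pow 2 t).hasDerivWithinAt.mul_const (F 2 c))).congr_deriv
        (by push_cast; ring)) b1
  have := b0 h ⟨hh.le, le_rfl⟩
  simp only [hF0] at this
  rw [hder]
  convert this using 1
  · congr 1; ring
  · push_cast; ring

/-- Local truncation error of the five-point discrete Laplacian: if `u : ℝ² → ℝ`
is `C⁴` on the closed ball of radius `h` around `(x,y)` with the fourth
derivative bounded by `M` there, then the five-point difference quotient
approximates the Laplacian `u_xx + u_yy` at `(x,y)` with error `≤ M h² / 6`. -/
theorem fivePoint_laplacian_truncation (h M x y : ℝ) (hh : 0 < h) (hM : 0 ≤ M)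
    (u : ℝ × ℝ → ℝ)
    (hu : ContDiffOn ℝ 4 u (Metric.closedBall (x, y) h))
    (hbd : ∀ p ∈ Metric.closedBall (x, y) h,
      ‖iteratedFDerivWithin ℝ 4 u (Metric.closedBall (x, y) h) p‖ ≤ M) :
    |(u (x - h, y) + u (x + h, y) + u (x, y - h) + u (x, y + h) - 4 * u (x, y)) / h ^ 2
        - (deriv (deriv fun t => u (t, y)) x + deriv (deriv fun t => u (x, t)) y)|
      ≤ M * h ^ 2 / 6 := by
  have hs : UniqueDiffOn ℝ (Metric.closedBall (x, y) h) := by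
    refine uniqueDiffOn_convex (convex_closedBall _ _) ⟨(x, y), ?_⟩
    exact Metric.ball_subset_interior_closedBall (Metric.mem_ball_self hh)
  have h1 := fp_line h M x hh _ hs u hu hbd (fun t => (t, y)) (1, 0) (by simp [Prod.norm_def])
    (fun t => (hasDerivAt_id t).prodMk (hasDerivAt_const t y))
    (fun t ht => by
      simp only [Metric.mem_closedBall, Prod.dist_eq, dist_self, Real.dist_eq]
      exact max_le (abs_le.2 ⟨by linarith [ht.1], by linarith [ht.2]⟩) hh.le)
  have h2 := fp_line h M y hh _ hs u hu hbd (fun t => (x, t)) (0, 1) (by simp [Prod.norm_def])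
    (fun t => (hasDerivAt_const t x).prodMk (hasDerivAt_id t))
    (fun t ht => by
      simp only [Metric.mem_closedBall, Prod.dist_eq, dist_self, Real.dist_eq]
      exact max_le hh.le (abs_le.2 ⟨by linarith [ht.1], by linarith [ht.2]⟩))
  set A := deriv (deriv fun t => u (t, y)) x
  set B := deriv (deriv fun t => u (x, t)) y
  have hp : 0 < h ^ 2 := by positivity
  have e : (u (x - h, y) + u (x + h, y) + u (x, y - h) + u (x, y + h) - 4 * u (x, y)) / h ^ 2
      - (A + B) = ((u (x - h, y) + u (x + h, y) - 2 * u (x, y) - h ^ 2 * A) +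
        (u (x, y - h) + u (x, y + h) - 2 * u (x, y) - h ^ 2 * B)) / h ^ 2 := by
    field_simp
    ring
  rw [e, abs_div, abs_of_pos hp, div_le_iff₀ hp]
  refine (abs_add_le _ _).trans ((add_le_add h1 h2).trans (le_of_eq ?_))
  ring
end

section
/- Let X ∈ ℝ, M ≥ 0, h > 0, and let p⁻, p⁺ : ℝ → ℝ be Lipschitz continuous with Lipschitz constant M. Define p : ℝ → ℝ by p(x) = p⁻(x) for x ≤ X and p(x) = p⁺(x) for x > X. Then for every x with |x − X| ≤ h/2, |(p(x+h) − p(x−h))/(2h) − (p⁺(X) − p⁻(X))/(2h)| ≤ (3/2)·M. That is, the centered difference quotient of the piecewise function p across the jump point equals the jump [p] = p⁺(X) − p⁻(X) times the discrete delta value 1/(2h), up to an O(1) error bounded explicitly by (3/2)M. -/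
/-- Across a jump point `X` of the piecewise-Lipschitz pressure `p`, the
centered difference quotient equals the jump `[p] = p⁺(X) − p⁻(X)` times the
discrete delta value `1/(2h)`, up to an `O(1)` error bounded by `(3/2)M`. -/
theorem centered_difference_across_jump (X M h : ℝ) (hh : 0 < h) (hM : 0 ≤ M)
    (pm pp : ℝ → ℝ)
    (hpm : LipschitzWith (Real.toNNReal M) pm)
    (hpp : LipschitzWith (Real.toNNReal M) pp)
    (p : ℝ → ℝ) (hp : ∀ x, p x = if x ≤ X then pm x else pp x) :
    ∀ x : ℝ, |x - X| ≤ h / 2 →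
      |(p (x + h) - p (x - h)) / (2 * h) - (pp X - pm X) / (2 * h)| ≤ 3 / 2 * M := by
  intro x hx
  obtain ⟨h1, h2⟩ := abs_le.mp hx
  have a := hpp.dist_le_mul (x + h) X
  have b := hpm.dist_le_mul (x - h) X
  rw [Real.dist_eq, Real.dist_eq, Real.coe_toNNReal M hM] at a b
  rw [abs_of_nonneg (by linarith : (0:ℝ) ≤ x + h - X)] at a
  rw [abs_of_nonpos (by linarith : x - h - X ≤ 0)] at b
  rw [hp, hp, if_neg (by linarith), if_pos (by linarith), ← sub_div, abs_div,
    abs_of_pos (by linarith : 0 < 2 * h), div_le_iff₀ (by linarith)]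
  obtain ⟨a1, a2⟩ := abs_le.mp a
  obtain ⟨b1, b2⟩ := abs_le.mp b
  have hMh : 0 ≤ M * h := mul_nonneg hM hh.le
  rw [abs_le]
  constructor <;> nlinarith
end

section
/- Let h > 0, let W ≥ 1 be an integer, let M ≥ 0, and let X ∈ ℝ with X/h not an integer. Let p⁻, p⁺ : ℝ → ℝ be Lipschitz continuous with Lipschitz constant M, and define p : ℝ → ℝ by p(x) = p⁻(x) for x ≤ X and p(x) = p⁺(x) for x > X. Then the set S = { i ∈ ℤ : |i·h − X| ≤ W·h } is finite and nonempty, and | Σ_{i∈S} (p((i+1)·h) − p((i−1)·h))/2 − (p⁺(X) − p⁻(X)) | ≤ 2·(W+1)·M·h. That is, the grid sum of h times the centered difference quotients of p over the band of grid points within distance Wh of the jump point X recovers the jump [p] = p⁺(X) − p⁻(X) to first order in h. -/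
theorem telescoping_aux (f : ℤ → ℝ) (a : ℤ) (n : ℕ) :
    ∑ i ∈ Finset.Ico a (a + n), (f (i + 1) - f (i - 1)) / 2
      = (f (a + n) + f (a + n - 1) - f a - f (a - 1)) / 2 := by
  induction n with
  | zero => simp
  | succ n ih =>
    have e : Finset.Ico a (a + ((n + 1 : ℕ) : ℤ)) = insert (a + (n : ℤ)) (Finset.Ico a (a + n)) := by
      ext i
      simp only [Finset.mem_Ico, Finset.mem_insert]
      push_cast
      omega
    rw [e, Finset.sum_insert (by simp), ih]
    have e1 : a + ((n + 1 : ℕ) : ℤ) = a + n + 1 := by push_cast; ring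
    rw [e1, add_sub_cancel_right]
    ring

theorem lip_aux (M : ℝ) (hM : 0 ≤ M) (q : ℝ → ℝ) (hq : LipschitzWith (Real.toNNReal M) q)
    (x y : ℝ) : |q x - q y| ≤ M * |x - y| := by
  have := hq.dist_le_mul x y
  rwa [Real.dist_eq, Real.dist_eq, Real.coe_toNNReal M hM] at this

/-- Telescoping cancellation near the interface: the grid sum of `h` times the
centered difference quotients of the piecewise-Lipschitz pressure `p`, over the
band of grid points within distance `W h` of the jump point `X`, recovers the
jump `[p] = p⁺(X) − p⁻(X)` to first order in `h`. -/
theorem grid_sum_centered_differences_recovers_jump (h : ℝ) (hh : 0 < h)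
    (W : ℤ) (hW : 1 ≤ W) (M : ℝ) (hM : 0 ≤ M) (X : ℝ)
    (hX : ∀ k : ℤ, X / h ≠ (k : ℝ))
    (pm pp : ℝ → ℝ)
    (hpm : LipschitzWith (Real.toNNReal M) pm)
    (hpp : LipschitzWith (Real.toNNReal M) pp)
    (p : ℝ → ℝ) (hp : ∀ x, p x = if x ≤ X then pm x else pp x) :
    ∃ S : Finset ℤ,
      (∀ i : ℤ, i ∈ S ↔ |(i : ℝ) * h - X| ≤ (W : ℝ) * h) ∧
      S.Nonempty ∧
      |(∑ i ∈ S, (p (((i : ℝ) + 1) * h) - p (((i : ℝ) - 1) * h)) / 2)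
          - (pp X - pm X)| ≤ 2 * ((W : ℝ) + 1) * M * h := by
  obtain ⟨k, hk⟩ : ∃ k : ℤ, k = ⌊X / h⌋ := ⟨_, rfl⟩
  obtain ⟨t, ht⟩ : ∃ t : ℝ, t = X / h - k := ⟨_, rfl⟩
  have ht0 : 0 < t := by
    have h1 : (k : ℝ) ≤ X / h := hk ▸ Int.floor_le _
    have h2 := lt_of_le_of_ne h1 (hX k).symm
    linarith
  have ht1 : t < 1 := by
    have h1 : X / h < (k : ℝ) + 1 := hk ▸ Int.lt_floor_add_one _
    linarith
  have hXe : X = (k + t) * h := by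
    rw [ht]; field_simp; ring
  have hW' : (1 : ℝ) ≤ W := by exact_mod_cast hW
  obtain ⟨n, hn⟩ : ∃ n : ℕ, (n : ℤ) = 2 * W := ⟨(2 * W).toNat, by omega⟩
  refine ⟨Finset.Ico (k - W + 1) (k - W + 1 + n), ?_, ?_, ?_⟩
  · intro i
    have e : (i : ℝ) * h - X = (i - k - t) * h := by rw [hXe]; ring
    rw [e, abs_mul, abs_of_pos hh, mul_le_mul_iff_left₀ hh, abs_le, Finset.mem_Ico, hn]
    constructor
    · rintro ⟨h1, h2⟩
      have h3 : i ≤ k + W := by omega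
      have h1' : (k : ℝ) - W + 1 ≤ i := by exact_mod_cast h1
      have h3' : (i : ℝ) ≤ k + W := by exact_mod_cast h3
      constructor <;> linarith
    · rintro ⟨h1, h2⟩
      have h3 : (k : ℝ) - W < i := by linarith
      have h4 : (i : ℝ) < k + W + 1 := by linarith
      have h3' : k - W < i := by exact_mod_cast h3
      have h4' : i < k + W + 1 := by exact_mod_cast h4
      omega
  · rw [Finset.nonempty_Ico]; omega
  · have key := telescoping_aux (fun i : ℤ => p ((i : ℝ) * h)) (k - W + 1) n
    have hright : ∀ c : ℝ, 1 ≤ c → |p ((k + c) * h) - pp X| ≤ M * ((c - t) * h) := by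
      intro c hc
      have hpos : 0 < (c - t) * h := mul_pos (by linarith) hh
      have e : (k + c) * h - X = (c - t) * h := by rw [hXe]; ring
      rw [hp, if_neg (by linarith)]
      have := lip_aux M hM pp hpp ((k + c) * h) X
      rwa [e, abs_of_pos hpos] at this
    have hleft : ∀ c : ℝ, 0 ≤ c → |p ((k - c) * h) - pm X| ≤ M * ((c + t) * h) := by
      intro c hc
      have hpos : 0 < (c + t) * h := mul_pos (by linarith) hh
      have e : (k - c) * h - X = -((c + t) * h) := by rw [hXe]; ring
      rw [hp, if_pos (by linarith)]
      have := lip_aux M hM pm hpm ((k - c) * h) X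
      rwa [e, abs_neg, abs_of_pos hpos] at this
    have a1 := abs_le.mp (hright (W + 1) (by linarith))
    have a2 := abs_le.mp (hright W hW')
    have a3 := abs_le.mp (hleft (W - 1) (by linarith))
    have a4 := abs_le.mp (hleft W (by linarith))
    have hnr : (n : ℝ) = 2 * W := by exact_mod_cast hn
    push_cast at key
    rw [key, hnr]
    have e1 : (k : ℝ) - W + 1 + 2 * W = k + (W + 1) := by ring
    have e2 : (k : ℝ) + (W + 1) - 1 = k + W := by ring
    have e3 : (k : ℝ) - W + 1 = k - (W - 1) := by ring
    have e4 : (k : ℝ) - (W - 1) - 1 = k - W := by ring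
    rw [e1, e2, e3, e4]
    have hMh : 0 ≤ M * h := mul_nonneg hM hh.le
    rw [abs_le]
    constructor <;> nlinarith [a1.1, a1.2, a2.1, a2.2, a3.1, a3.2, a4.1, a4.2]
end

section
/- Let R ≥ 1 be a real number. Then there exists a constant C > 0 (depending only on R) such that for every h with 0 < h ≤ 1, the family ((i,j) ↦ h⁶ / ( | √((i·h)² + (j·h)²) − R | + h )⁴) indexed by (i,j) ∈ ℤ × ℤ is summable, and Σ_{(i,j)∈ℤ×ℤ} h⁶ / ( | √((i·h)² + (j·h)²) − R | + h )⁴ ≤ C·h. -/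
/-- The one-dimensional majorant `1/(1+|k|)²`. -/
noncomputable def gMaj (k : ℤ) : ℝ := 1 / (1 + |(k : ℝ)|) ^ 2

lemma gMaj_nonneg (k : ℤ) : 0 ≤ gMaj k := by unfold gMaj; positivity

lemma gMaj_summable : Summable gMaj := by
  have h0 : Summable (fun n : ℕ => 1 / (1 + (n : ℝ)) ^ 2) := by
    have h1 := (summable_nat_add_iff 1).2
      (Real.summable_one_div_nat_pow.2 (by norm_num : 1 < 2))
    refine h1.congr fun n => ?_
    push_cast
    rw [add_comm]
  apply Summable.of_nat_of_neg
  · refine h0.congr fun n => ?_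
    simp [gMaj]
  · refine h0.congr fun n => ?_
    simp [gMaj]

lemma gMaj_shift (A : Finset ℤ) (N : ℤ) : ∑ i ∈ A, gMaj (i - N) ≤ ∑' k, gMaj k := by
  have h1 : Summable (fun i : ℤ => gMaj (i - N)) :=
    gMaj_summable.comp_injective (i := fun i : ℤ => i - N) (fun a b hab => by simpa using hab)
  have h2 : ∑' i : ℤ, gMaj (i - N) = ∑' k, gMaj k := (Equiv.subRight N).tsum_eq gMaj
  rw [← h2]
  exact h1.sum_le_tsum A (fun i _ => gMaj_nonneg _)

lemma gMaj_shift' (A : Finset ℤ) (N : ℤ) : ∑ i ∈ A, gMaj (i + N) ≤ ∑' k, gMaj k := by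
  have := gMaj_shift A (-N)
  simpa using this

/-- Separation of radii along a horizontal line, in the sector `b ≤ x, y`. -/
lemma radius_sep (b x y : ℝ) (hb : 0 ≤ b) (hx : b ≤ x) (hy : b ≤ y) :
    |x - y| ≤ 2 * |√(x ^ 2 + b ^ 2) - √(y ^ 2 + b ^ 2)| := by
  have hr := Real.sq_sqrt (by positivity : 0 ≤ x ^ 2 + b ^ 2)
  have hs := Real.sq_sqrt (by positivity : 0 ≤ y ^ 2 + b ^ 2)
  have hr0 := Real.sqrt_nonneg (x ^ 2 + b ^ 2)
  have hs0 := Real.sqrt_nonneg (y ^ 2 + b ^ 2)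
  set r := √(x ^ 2 + b ^ 2)
  set s := √(y ^ 2 + b ^ 2)
  have hrx : r ≤ 2 * x := by nlinarith
  have hsy : s ≤ 2 * y := by nlinarith
  rcases (add_nonneg (hb.trans hx) (hb.trans hy)).eq_or_lt with h0 | h0
  · have : x = 0 := by linarith
    have : y = 0 := by linarith
    subst x; subst y; simp
  · have key : |x - y| * (x + y) = |r - s| * (r + s) := by
      have e1 : |x - y| * (x + y) = |(x - y) * (x + y)| := by rw [abs_mul, abs_of_pos h0]
      have e2 : |r - s| * (r + s) = |(r - s) * (r + s)| := by
        rw [abs_mul, abs_of_nonneg (add_nonneg hr0 hs0)]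
      rw [e1, e2]
      congr 1; nlinarith
    have h3 : |r - s| * (r + s) ≤ |r - s| * (2 * (x + y)) :=
      mul_le_mul_of_nonneg_left (by linarith) (abs_nonneg _)
    by_contra hc
    push Not at hc
    nlinarith

lemma radius_center (b ρ : ℝ) (hb : 0 ≤ b) (hρ : 0 ≤ ρ) :
    ∃ a : ℝ, ∀ x : ℝ, b ≤ x → |x - a| ≤ 2 * |√(x ^ 2 + b ^ 2) - ρ| := by
  by_cases hc : 2 * b ^ 2 ≤ ρ ^ 2
  · refine ⟨√(ρ ^ 2 - b ^ 2), fun x hx => ?_⟩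
    have h1 : b ≤ √(ρ ^ 2 - b ^ 2) := Real.le_sqrt_of_sq_le (by linarith)
    have h2 := radius_sep b x _ hb hx h1
    rw [Real.sq_sqrt (by nlinarith [sq_nonneg b])] at h2
    simpa [Real.sqrt_sq hρ] using h2
  · push Not at hc
    refine ⟨b, fun x hx => (radius_sep b x b hb hx le_rfl).trans ?_⟩
    have h1 : ρ ≤ √(b ^ 2 + b ^ 2) := Real.le_sqrt_of_sq_le (by linarith)
    have h2 : √(b ^ 2 + b ^ 2) ≤ √(x ^ 2 + b ^ 2) := Real.sqrt_le_sqrt (by nlinarith)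
    rw [abs_of_nonneg (by linarith), abs_of_nonneg (by linarith)]
    linarith

lemma line_bound (ρ : ℝ) (hρ : 0 ≤ ρ) (j : ℤ) :
    ∃ N : ℤ, ∀ i : ℤ, |j| ≤ |i| →
      1 / (1 + |√((i : ℝ) ^ 2 + (j : ℝ) ^ 2) - ρ|) ^ 2 ≤ 16 * (gMaj (i - N) + gMaj (i + N)) := by
  obtain ⟨a, ha⟩ := radius_center |(j : ℝ)| ρ (abs_nonneg _) hρ
  refine ⟨⌊a⌋, fun i hij => ?_⟩
  have hij' : |(j : ℝ)| ≤ |(i : ℝ)| := by exact_mod_cast hij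
  have h1 := ha _ hij'
  rw [sq_abs, sq_abs] at h1
  set d := |√((i : ℝ) ^ 2 + (j : ℝ) ^ 2) - ρ|
  have hd : 0 ≤ d := abs_nonneg _
  have h2 : |(|(i : ℝ)| - (⌊a⌋ : ℝ))| ≤ 2 * d + 1 := by
    have e1 := Int.floor_le a
    have e2 := Int.lt_floor_add_one a
    rw [abs_le] at h1 ⊢
    constructor <;> linarith [h1.1, h1.2]
  have gen : ∀ k : ℤ, |(k : ℝ)| ≤ 2 * d + 1 → 1 / (1 + d) ^ 2 ≤ 16 * gMaj k := by
    intro k hk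
    unfold gMaj
    have hk0 := abs_nonneg (k : ℝ)
    rw [mul_one_div, div_le_div_iff₀ (by positivity) (by positivity)]
    nlinarith
  rcases le_total 0 (i : ℝ) with hi | hi
  · rw [abs_of_nonneg hi] at h2
    have := gen (i - ⌊a⌋) (by push_cast; exact h2)
    linarith [gMaj_nonneg (i + ⌊a⌋)]
  · rw [abs_of_nonpos hi] at h2
    have := gen (i + ⌊a⌋) (by
      push_cast; rw [← abs_neg]; convert h2 using 2; ring)
    linarith [gMaj_nonneg (i - ⌊a⌋)]

/-- Weight in the transversal index. -/
noncomputable def uMaj (M : ℤ) (j : ℤ) : ℝ :=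
  (if j ∈ Finset.Icc (-M) M then 1 else 0) + (gMaj (j - M) + gMaj (j + M))

lemma uMaj_nonneg (M j : ℤ) : 0 ≤ uMaj M j := by
  unfold uMaj
  have := gMaj_nonneg (j - M)
  have := gMaj_nonneg (j + M)
  split_ifs <;> linarith

lemma uMaj_sum (M : ℤ) (hM : 0 ≤ M) (A : Finset ℤ) :
    ∑ j ∈ A, uMaj M j ≤ 2 * M + 1 + 2 * ∑' k, gMaj k := by
  unfold uMaj
  rw [Finset.sum_add_distrib, Finset.sum_add_distrib]
  have h1 := gMaj_shift A M
  have h2 := gMaj_shift' A M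
  have h3 : ∑ j ∈ A, (if j ∈ Finset.Icc (-M) M then (1 : ℝ) else 0) ≤ 2 * M + 1 := by
    rw [Finset.sum_boole]
    have : (A.filter (fun j => j ∈ Finset.Icc (-M) M)).card ≤ (Finset.Icc (-M) M).card :=
      Finset.card_le_card (fun j hj => (Finset.mem_filter.1 hj).2)
    have h4 : ((Finset.Icc (-M) M).card : ℤ) = 2 * M + 1 := by
      rw [Int.card_Icc]; omega
    have h5 : ((A.filter (fun j => j ∈ Finset.Icc (-M) M)).card : ℤ) ≤ 2 * M + 1 := by
      rw [← h4]; exact_mod_cast this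
    exact_mod_cast h5
  linarith

lemma uMaj_bound (ρ r : ℝ) (M j : ℤ) (hM : ρ ≤ M) (hr : |(j : ℝ)| ≤ r) :
    1 / (1 + |r - ρ|) ^ 2 ≤ uMaj M j := by
  unfold uMaj
  have p1 := gMaj_nonneg (j - M)
  have p2 := gMaj_nonneg (j + M)
  have hd : 0 ≤ |r - ρ| := abs_nonneg _
  split_ifs with hj
  · have : 1 / (1 + |r - ρ|) ^ 2 ≤ 1 := by
      rw [div_le_one (by positivity)]; nlinarith
    linarith
  · have gen : ∀ k : ℤ, |(k : ℝ)| ≤ r - ρ → 1 / (1 + |r - ρ|) ^ 2 ≤ gMaj k := by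
      intro k hk
      unfold gMaj
      have := le_abs_self (r - ρ)
      exact one_div_le_one_div_of_le (by positivity) 
        (pow_le_pow_left₀ (by positivity) (by linarith) 2)
    rw [Finset.mem_Icc, not_and_or] at hj
    push Not at hj
    rw [abs_le] at hr
    rcases hj with hj | hj
    · have hj' : (j : ℝ) < -M := by exact_mod_cast hj
      have := gen (j + M) (by
        push_cast; rw [abs_of_nonpos (by linarith)]; linarith [hr.1])
      linarith
    · have hj' : (M : ℝ) < j := by exact_mod_cast hj
      have := gen (j - M) (by
        push_cast; rw [abs_of_nonneg (by linarith)]; linarith [hr.2])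
      linarith

lemma scaled_sum (ρ : ℝ) (hρ : 1 ≤ ρ) (s : Finset (ℤ × ℤ)) :
    ∑ q ∈ s, 1 / (1 + |√((q.1 : ℝ) ^ 2 + (q.2 : ℝ) ^ 2) - ρ|) ^ 4 ≤
      (64 * (∑' k, gMaj k) * (5 + 2 * ∑' k, gMaj k)) * ρ := by
  classical
  have hG : 0 ≤ ∑' k, gMaj k := tsum_nonneg gMaj_nonneg
  choose N hN using line_bound ρ (by linarith)
  set G := ∑' k, gMaj k with hGdef
  set M : ℤ := ⌈ρ⌉ with hMdef
  have hM1 : ρ ≤ M := Int.le_ceil ρ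
  have hM2 : (M : ℝ) < ρ + 1 := Int.ceil_lt_add_one ρ
  have hM0 : 0 ≤ M := Int.ceil_nonneg (by linarith)
  let F : ℤ → ℤ → ℝ := fun i j => uMaj M j * (16 * (gMaj (i - N j) + gMaj (i + N j)))
  have hF0 : ∀ i j, 0 ≤ F i j := fun i j =>
    mul_nonneg (uMaj_nonneg _ _) (mul_nonneg (by norm_num)
      (add_nonneg (gMaj_nonneg _) (gMaj_nonneg _)))
  have hF : ∀ i j : ℤ, |j| ≤ |i| →
      1 / (1 + |√((i : ℝ) ^ 2 + (j : ℝ) ^ 2) - ρ|) ^ 4 ≤ F i j := by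
    intro i j hij
    have h1 := hN j i hij
    have h2 := uMaj_bound ρ (√((i : ℝ) ^ 2 + (j : ℝ) ^ 2)) M j hM1
      (Real.abs_le_sqrt (by nlinarith [sq_nonneg (i : ℝ)]))
    calc 1 / (1 + |√((i : ℝ) ^ 2 + (j : ℝ) ^ 2) - ρ|) ^ 4
        = 1 / (1 + |√((i : ℝ) ^ 2 + (j : ℝ) ^ 2) - ρ|) ^ 2 *
          (1 / (1 + |√((i : ℝ) ^ 2 + (j : ℝ) ^ 2) - ρ|) ^ 2) := by
            rw [one_div_mul_one_div]; ring_nf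
      _ ≤ F i j := mul_le_mul h2 h1 (by positivity) (uMaj_nonneg _ _)
  have hT : ∀ q : ℤ × ℤ, 1 / (1 + |√((q.1 : ℝ) ^ 2 + (q.2 : ℝ) ^ 2) - ρ|) ^ 4 ≤
      F q.1 q.2 + F q.2 q.1 := by
    rintro ⟨i, j⟩
    rcases le_total |j| |i| with h | h
    · linarith [hF i j h, hF0 j i]
    · have := hF j i h
      rw [add_comm ((j : ℝ) ^ 2)] at this
      simp only
      linarith [hF0 i j]
  have hFsum : ∀ A B : Finset ℤ, ∑ j ∈ B, ∑ i ∈ A, F i j ≤ (2 * M + 1 + 2 * G) * (32 * G) := by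
    intro A B
    have hin : ∀ j, ∑ i ∈ A, F i j ≤ uMaj M j * (32 * G) := by
      intro j
      simp only [F]
      rw [← Finset.mul_sum, ← Finset.mul_sum, Finset.sum_add_distrib]
      refine mul_le_mul_of_nonneg_left ?_ (uMaj_nonneg _ _)
      linarith [gMaj_shift A (N j), gMaj_shift' A (N j)]
    calc ∑ j ∈ B, ∑ i ∈ A, F i j ≤ ∑ j ∈ B, uMaj M j * (32 * G) :=
          Finset.sum_le_sum fun j _ => hin j
      _ = (∑ j ∈ B, uMaj M j) * (32 * G) := by rw [Finset.sum_mul]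
      _ ≤ _ := mul_le_mul_of_nonneg_right (uMaj_sum M hM0 B) (by linarith)
  let A := s.image Prod.fst
  let B := s.image Prod.snd
  have hs : s ⊆ A ×ˢ B := Finset.subset_product
  calc ∑ q ∈ s, 1 / (1 + |√((q.1 : ℝ) ^ 2 + (q.2 : ℝ) ^ 2) - ρ|) ^ 4
      ≤ ∑ q ∈ s, (F q.1 q.2 + F q.2 q.1) := Finset.sum_le_sum fun q _ => hT q
    _ ≤ ∑ q ∈ A ×ˢ B, (F q.1 q.2 + F q.2 q.1) :=
        Finset.sum_le_sum_of_subset_of_nonneg hs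
          (fun q _ _ => add_nonneg (hF0 _ _) (hF0 _ _))
    _ = ∑ j ∈ B, ∑ i ∈ A, F i j + ∑ i ∈ A, ∑ j ∈ B, F j i := by
        rw [Finset.sum_add_distrib, Finset.sum_product_right, Finset.sum_product]
    _ ≤ (2 * M + 1 + 2 * G) * (32 * G) + (2 * M + 1 + 2 * G) * (32 * G) :=
        add_le_add (hFsum A B) (hFsum B A)
    _ = (2 * M + 1 + 2 * G) * (64 * G) := by ring
    _ ≤ ((5 + 2 * G) * ρ) * (64 * G) :=
        mul_le_mul_of_nonneg_right (by nlinarith) (by linarith)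
    _ = _ := by ring


/-- The discrete `L²` sum of the squared pointwise pressure error bound: the
family `h⁶/(d_{ij}+h)⁴`, where `d_{ij}` is the distance from the grid point
`(ih, jh)` to the circle of radius `R`, is summable over `ℤ × ℤ` with total sum
at most `C h`, uniformly for `0 < h ≤ 1`. -/
theorem pressure_error_l2_sum (R : ℝ) (hR : 1 ≤ R) :
    ∃ C : ℝ, 0 < C ∧ ∀ h : ℝ, 0 < h → h ≤ 1 →
      Summable (fun q : ℤ × ℤ =>
        h ^ 6 / (|Real.sqrt (((q.1 : ℝ) * h) ^ 2 + ((q.2 : ℝ) * h) ^ 2) - R| + h) ^ 4) ∧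
      (∑' q : ℤ × ℤ,
        h ^ 6 / (|Real.sqrt (((q.1 : ℝ) * h) ^ 2 + ((q.2 : ℝ) * h) ^ 2) - R| + h) ^ 4)
        ≤ C * h := by


  have hG : 0 ≤ ∑' k, gMaj k := tsum_nonneg gMaj_nonneg
  set K := 64 * (∑' k, gMaj k) * (5 + 2 * ∑' k, gMaj k) with hK
  have hK0 : 0 ≤ K := by positivity
  refine ⟨K * R + 1, by positivity, fun h h0 h1 => ?_⟩
  have hρ : 1 ≤ R / h := by rw [le_div_iff₀ h0]; linarith
  have hterm : ∀ q : ℤ × ℤ,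
      h ^ 6 / (|Real.sqrt (((q.1 : ℝ) * h) ^ 2 + ((q.2 : ℝ) * h) ^ 2) - R| + h) ^ 4 =
      h ^ 2 * (1 / (1 + |√((q.1 : ℝ) ^ 2 + (q.2 : ℝ) ^ 2) - R / h|) ^ 4) := by
    intro q
    have e1 : √(((q.1 : ℝ) * h) ^ 2 + ((q.2 : ℝ) * h) ^ 2) =
        √((q.1 : ℝ) ^ 2 + (q.2 : ℝ) ^ 2) * h := by
      rw [mul_pow, mul_pow, ← add_mul, Real.sqrt_mul (by positivity), Real.sqrt_sq h0.le]
    have e2 : |√((q.1 : ℝ) ^ 2 + (q.2 : ℝ) ^ 2) * h - R| =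
        |√((q.1 : ℝ) ^ 2 + (q.2 : ℝ) ^ 2) - R / h| * h := by
      rw [← abs_of_pos h0, ← abs_mul, abs_of_pos h0, sub_mul, div_mul_cancel₀ _ h0.ne']
    rw [e1, e2]
    have hd := abs_nonneg (√((q.1 : ℝ) ^ 2 + (q.2 : ℝ) ^ 2) - R / h)
    generalize |√((q.1 : ℝ) ^ 2 + (q.2 : ℝ) ^ 2) - R / h| = d at hd
    have e3 : d * h + h = h * (1 + d) := by ring
    rw [e3, mul_pow]
    have : (1 + d) ≠ 0 := by positivity
    field_simp
  have hfin : ∀ s : Finset (ℤ × ℤ), ∑ q ∈ s,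
      h ^ 6 / (|Real.sqrt (((q.1 : ℝ) * h) ^ 2 + ((q.2 : ℝ) * h) ^ 2) - R| + h) ^ 4
      ≤ (K * R + 1) * h := by
    intro s
    simp only [hterm]
    rw [← Finset.mul_sum]
    have h2 := mul_le_mul_of_nonneg_left (scaled_sum (R / h) hρ s) (sq_nonneg h)
    have h3 : h ^ 2 * (K * (R / h)) = K * R * h := by field_simp
    rw [← hK, h3] at h2
    linarith
  have hnn : ∀ q : ℤ × ℤ, 0 ≤
      h ^ 6 / (|Real.sqrt (((q.1 : ℝ) * h) ^ 2 + ((q.2 : ℝ) * h) ^ 2) - R| + h) ^ 4 :=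
    fun q => by positivity
  exact ⟨summable_of_sum_le hnn hfin, Real.tsum_le_of_sum_le hnn hfin⟩
end
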